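/- Let q be a prime power, n ≥ 1, and let d be a divisor of n. Suppose H ≤ GL_n(F_q) contains a cyclic subgroup S of order q^n − 1 and H is isomorphic as an abstract group to GL_{n/d}(F_{q^d}). Then the center Z(H) of H is contained in S, and |Z(H)| = q^d − 1; that is, Z(H) is the unique subgroup of the cyclic group S of order q^d − 1. -/

import Mathlib

open Matrix
open scoped MatrixGroups

/-!
Let `g` generate `S` and put `V = F ^ n`. By Cayley–Hamilton the algebra `F[g]` has at most
`q ^ n` elements, and it contains `0` together with the `q ^ n - 1` elements of `S`; hence
`F[g] = S ∪ {0}`, and every nonzero element of `F[g]` is invertible. Evaluation at a nonzero vector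
is therefore injective on `F[g]`, so by counting it is a bijection `F[g] → V`. A commutative algebra
with a cyclic vector is its own centralizer, so `S` is its own centralizer in `GL(V)`, and
`S ≤ H` gives `Z(H) ≤ C(S) = S`. The order of `Z(H)` is that of the group of scalar matrices.
-/

theorem centralizer_subset_of_exists_smul_eq {M α : Type*} [Monoid M] [MulAction M α]
    [FaithfulSMul M α] {A : Set M} (hA : A ⊆ A.centralizer) {x : α}
    (hx : ∀ y, ∃ a ∈ A, a • x = y) : A.centralizer ⊆ A := by
  intro c hc
  obtain ⟨a, ha, hac⟩ := hx (c • x)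
  suffices a = c from this ▸ ha
  refine FaithfulSMul.eq_of_smul_eq_smul (α := α) fun y ↦ ?_
  obtain ⟨b, hb, rfl⟩ := hx y
  calc a • b • x = b • a • x := by rw [← mul_smul, ← mul_smul, hA ha b hb]
    _ = b • c • x := by rw [hac]
    _ = c • b • x := by rw [← mul_smul, ← mul_smul, hc b hb]

theorem exists_mem_apply_eq_of_card_le {R V : Type*} [Semiring R] [AddCommGroup V] [Module R V]
    [Finite V] {A : AddSubgroup (Module.End R V)} (hA : ∀ a ∈ A, a ≠ 0 → IsUnit a)
    (hcard : Nat.card V ≤ Nat.card A) {v : V} (hv : v ≠ 0) (w : V) : ∃ a ∈ A, a v = w := by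
  let ev : A →+ V := (LinearMap.applyₗ' ℕ v).toAddMonoidHom.comp A.subtype
  have hev : Function.Injective ev := by
    refine (injective_iff_map_eq_zero ev).mpr fun a ha ↦ ?_
    by_contra ha₀
    have hunit := hA a a.2 (by simpa using ha₀)
    exact hv (((Module.End.isUnit_iff _).mp hunit).injective (ha.trans (map_zero _).symm))
  obtain ⟨a, ha⟩ := (hev.bijective_of_nat_card_le hcard).surjective w
  exact ⟨a, a.2, ha⟩

theorem ncard_insert_zero_image_coe {M₀ : Type*} [MonoidWithZero M₀] [Nontrivial M₀]
    (S : Subgroup M₀ˣ) [Finite S] :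
    (insert 0 ((↑) '' (S : Set M₀ˣ)) : Set M₀).ncard = Nat.card S + 1 := by
  have hS : (S : Set M₀ˣ).Finite := Set.toFinite _
  have h₀ : (0 : M₀) ∉ ((↑) '' (S : Set M₀ˣ) : Set M₀) := fun ⟨s, _, hs⟩ ↦ s.ne_zero hs
  rw [Set.ncard_insert_of_notMem h₀ (hS.image _),
    Set.ncard_image_of_injective _ Units.val_injective, ← Nat.card_coe_set_eq,
    SetLike.coe_sort_coe]

section AdjoinSingleton

variable {F : Type*} [Field F]

theorem finrank_adjoin_singleton {A : Type*} [Ring A] [Algebra F A] (x : A) :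
    Module.finrank F (Algebra.adjoin F {x}) = (minpoly F x).natDegree := by
  have hker : RingHom.ker (Polynomial.aeval (R := F) x) = Ideal.span {minpoly F x} :=
    minpoly.ker_aeval_eq_span_minpoly F x
  let e : (Polynomial F ⧸ Ideal.span {minpoly F x}) ≃ₐ[F] Algebra.adjoin F {x} :=
    (Ideal.quotientEquivAlgOfEq F hker.symm).trans <| (Ideal.quotientKerEquivRange _).trans <|
      Subalgebra.equivOfEq _ _ (Algebra.adjoin_singleton_eq_range_aeval F x).symm
  rw [← finrank_quotient_span_eq_natDegree]
  exact e.toLinearEquiv.finrank_eq.symm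

variable {V : Type*} [AddCommGroup V] [Module F V] [Module.Finite F V]

theorem finrank_adjoin_singleton_le (f : Module.End F V) :
    Module.finrank F (Algebra.adjoin F {f}) ≤ Module.finrank F V := by
  rw [finrank_adjoin_singleton, ← f.charpoly_natDegree]
  exact Polynomial.natDegree_le_of_dvd f.minpoly_dvd_charpoly f.charpoly_monic.ne_zero

theorem card_adjoin_singleton_le [Finite F] (f : Module.End F V) :
    Nat.card (Algebra.adjoin F {f}) ≤ Nat.card V := by
  rw [Module.natCard_eq_pow_finrank (K := F), Module.natCard_eq_pow_finrank (K := F) (V := V)]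
  exact Nat.pow_le_pow_right Nat.card_pos (finrank_adjoin_singleton_le f)

end AdjoinSingleton

section SingerSubgroup

variable {F V : Type*} [Field F] [Finite F] [AddCommGroup V] [Module F V] [Module.Finite F V]

theorem insert_zero_image_zpowers_eq_adjoin [Nontrivial V] {g : LinearMap.GeneralLinearGroup F V}
    (hg : orderOf g + 1 = Nat.card V) :
    insert 0 ((↑) '' (Subgroup.zpowers g : Set (LinearMap.GeneralLinearGroup F V))) =
      (Algebra.adjoin F {(g : Module.End F V)} : Set (Module.End F V)) := by
  have : Finite (Module.End F V) := Module.finite_of_finite F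
  have hfin : (Algebra.adjoin F {(g : Module.End F V)} : Set (Module.End F V)).Finite :=
    Set.toFinite _
  refine Set.eq_of_subset_of_ncard_le ?_ ?_ hfin
  · refine Set.insert_subset (zero_mem _) (Set.image_subset_iff.mpr fun s hs ↦ ?_)
    obtain ⟨k, rfl⟩ := mem_powers_iff_mem_zpowers.mpr hs
    simpa using pow_mem (Algebra.self_mem_adjoin_singleton F (g : Module.End F V)) k
  · rw [ncard_insert_zero_image_coe, Nat.card_zpowers, hg, ← Nat.card_coe_set_eq]
    exact card_adjoin_singleton_le _

theorem centralizer_zpowers_le_zpowers [Nontrivial V] {g : LinearMap.GeneralLinearGroup F V}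
    (hg : orderOf g + 1 = Nat.card V) :
    Subgroup.centralizer (Subgroup.zpowers g : Set (LinearMap.GeneralLinearGroup F V)) ≤
      Subgroup.zpowers g := by
  have : Finite V := Module.finite_of_finite F
  have : Finite (Module.End F V) := Module.finite_of_finite F
  let A := Algebra.adjoin F {(g : Module.End F V)}
  have hgA := insert_zero_image_zpowers_eq_adjoin hg
  have exists_mem_zpowers (a) (ha : a ∈ A) (ha₀ : a ≠ 0) : ∃ s ∈ Subgroup.zpowers g, ↑s = a :=
    (Set.mem_insert_iff.mp (hgA.ge ha)).resolve_left ha₀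
  have hcardA : Nat.card V ≤ Nat.card A := by
    rw [← hg, ← Nat.card_zpowers, ← ncard_insert_zero_image_coe, hgA, ← Nat.card_coe_set_eq]
    rfl
  have hunit (a) (ha : a ∈ A) (ha₀ : a ≠ 0) : IsUnit a := by
    obtain ⟨s, -, rfl⟩ := exists_mem_zpowers a ha ha₀
    exact s.isUnit
  obtain ⟨v, hv⟩ := exists_ne (0 : V)
  have hcyclic := exists_mem_apply_eq_of_card_le (A := A.toSubring.toAddSubgroup) hunit hcardA hv
  have hcomm : (A : Set (Module.End F V)) ⊆ Set.centralizer A := fun a ha b hb ↦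
    setLike_mul_comm hb ha
  intro c hc
  have hcA : (c : Module.End F V) ∈ Set.centralizer (A : Set (Module.End F V)) := fun a ha ↦
    (Algebra.commute_of_mem_adjoin_singleton_of_commute ha
      (congrArg Units.val (hc g (Subgroup.mem_zpowers g)).symm)).symm
  obtain ⟨s, hs, hsc⟩ := exists_mem_zpowers c
    (centralizer_subset_of_exists_smul_eq hcomm hcyclic hcA) c.ne_zero
  exact Units.ext hsc ▸ hs

theorem centralizer_le_of_isCyclic_of_card (S : Subgroup (LinearMap.GeneralLinearGroup F V))
    [IsCyclic S] (hS : Nat.card S = Nat.card V - 1) :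
    Subgroup.centralizer (S : Set (LinearMap.GeneralLinearGroup F V)) ≤ S := by
  have : Finite V := Module.finite_of_finite F
  have : Finite (Module.End F V) := Module.finite_of_finite F
  have hSpos : 0 < Nat.card S := Nat.card_pos
  have : Nontrivial V := Finite.one_lt_card_iff_nontrivial.mp (by lia)
  obtain ⟨g, rfl⟩ := S.isCyclic_iff_exists_zpowers_eq_top.mp ‹_›
  exact centralizer_zpowers_le_zpowers (by rw [← Nat.card_zpowers]; lia)

theorem centralizer_GL_le_of_isCyclic_of_card {ι : Type*} [Fintype ι] [DecidableEq ι]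
    (S : Subgroup (GL ι F)) [IsCyclic S] (hS : Nat.card S = Nat.card F ^ Nat.card ι - 1) :
    Subgroup.centralizer (S : Set (GL ι F)) ≤ S := by
  let toLin : GL ι F ≃* LinearMap.GeneralLinearGroup F (ι → F) := GeneralLinearGroup.toLin
  let T : Subgroup (LinearMap.GeneralLinearGroup F (ι → F)) := S.map (toLin : GL ι F →* _)
  let e : S ≃* T := toLin.subgroupMap S
  have : IsCyclic T := e.isCyclic.mp ‹_›
  have hT : Nat.card T = Nat.card (ι → F) - 1 := by
    rw [← Nat.card_congr e.toEquiv, hS, Nat.card_fun]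
  intro c hc
  have hTc : toLin c ∈ T := centralizer_le_of_isCyclic_of_card T hT
    (Subgroup.map_centralizer_le_centralizer_image _ _ (Subgroup.mem_map_of_mem _ hc))
  exact (Subgroup.mem_map_iff_mem toLin.injective).mp hTc

end SingerSubgroup

theorem map_subtype_center_le_centralizer {G : Type*} [Group G] {S H : Subgroup G} (hSH : S ≤ H) :
    (Subgroup.center H).map H.subtype ≤ Subgroup.centralizer (S : Set G) := by
  rintro _ ⟨z, hz, rfl⟩ s hs
  exact congrArg Subtype.val (Subgroup.mem_center_iff.mp hz ⟨s, hSH hs⟩)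

theorem card_center_GL (κ R : Type*) [Fintype κ] [DecidableEq κ] [Nonempty κ] [CommRing R] :
    Nat.card (Subgroup.center (GL κ R)) = Nat.card Rˣ := by
  have hinj : Function.Injective (GeneralLinearGroup.scalar κ : Rˣ →* GL κ R) :=
    Units.map_injective fun _ _ ↦ scalar_inj.mp
  rw [GeneralLinearGroup.center_eq_range_scalar,
    ← Nat.card_congr (MonoidHom.ofInjective hinj).toEquiv]

theorem stmt_11_general {ι κ F R : Type*} [Fintype ι] [DecidableEq ι] [Fintype κ] [DecidableEq κ]
    [Nonempty κ] [Field F] [Finite F] [CommRing R] (S H : Subgroup (GL ι F)) [IsCyclic S]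
    (hS : Nat.card S = Nat.card F ^ Nat.card ι - 1) (hSH : S ≤ H) (e : H ≃* GL κ R) :
    (Subgroup.center H).map H.subtype ≤ S ∧ Nat.card (Subgroup.center H) = Nat.card Rˣ :=
  ⟨(map_subtype_center_le_centralizer hSH).trans (centralizer_GL_le_of_isCyclic_of_card S hS),
    (Nat.card_congr (Subgroup.centerCongr e).toEquiv).trans (card_center_GL κ R)⟩

/-- If `H ≤ GL_n(F_q)` contains a cyclic subgroup `S` of order `q^n - 1` and `H`
is isomorphic as an abstract group to `GL_{n/d}(F_{q^d})` (`d ∣ n`), then the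
center of `H` is contained in `S` and has order `q^d - 1`. -/
theorem stmt_11 (q n d : ℕ) (hq : IsPrimePow q) (hn : 1 ≤ n) (hd : d ∣ n)
    (F : Type) [Field F] [Fintype F] (hF : Fintype.card F = q)
    (K : Type) [Field K] [Fintype K] (hK : Fintype.card K = q ^ d)
    (S H : Subgroup (GL (Fin n) F))
    (hScyc : IsCyclic S) (hScard : Nat.card S = q ^ n - 1)
    (hSH : S ≤ H)
    (hiso : Nonempty (H ≃* GL (Fin (n / d)) K)) :
    (Subgroup.center H).map H.subtype ≤ S ∧
      Nat.card (Subgroup.center H) = q ^ d - 1 := by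
  have : NeZero (n / d) := ⟨(Nat.div_pos_iff.mpr
    ⟨Nat.pos_of_dvd_of_pos hd hn, Nat.le_of_dvd hn hd⟩).ne'⟩
  simpa only [Nat.card_units, Nat.card_eq_fintype_card, hK] using
    stmt_11_general S H (by simpa [hF] using hScard) hSH hiso.some
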